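/- arXiv:1612.07607 — 3 statements merged into one kernel-verified Lean document; each statement's English description precedes it below -/
import Mathlib

section
/- Let Ψ be a unit vector in ℂ^{dA}⊗ℂ^{dB}⊗ℂ^{dC} with reduced state ρ_Ψ on AB, let {α_a}_{a=1}^{dA} be an orthonormal basis of ℂ^{dA}, and suppose that for every a there are a unit vector β_a ∈ ℂ^{dB} and p_a > 0 with Tr_A[ρ_Ψ(|α_a⟩⟨α_a|⊗I_B)] = p_a|β_a⟩⟨β_a| (the β_a need not be orthogonal). Then there exist unit vectors γ_a ∈ ℂ^{dC} and complex numbers c_a with |c_a|² = p_a such that Ψ = Σ_{a=1}^{dA} c_a α_a⊗β_a⊗γ_a. -/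
/-!
Read as a `dB × dC` matrix, the partial contraction `M_a = ⟨α_a|Ψ⟩` has the conditional state for
`α_a` as its Gram matrix `M_a M_aᴴ`. If this is `p_a |β_a⟩⟨β_a|`, then `M_a` has range in the line
of `β_a`, that is, `M_a = β_a ⊗ g_a` with `‖g_a‖² = p_a`. Completeness of the basis gives
`Ψ = ∑_a α_a ⊗ M_a = ∑_a α_a ⊗ β_a ⊗ g_a`, and it remains to write `g_a = c_a γ_a` with `γ_a` a
unit vector.
-/

open scoped BigOperators Kronecker Classical ComplexOrder

namespace EPR

noncomputable section

/-- Complex inner product `⟨u, v⟩ = ∑ conj (u a) * v a` (conjugate-linear in the first slot). -/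
def cinner {ι : Type*} [Fintype ι] (u v : ι → ℂ) : ℂ :=
  ∑ a, (starRingEnd ℂ) (u a) * v a

/-- `u` is a unit vector. -/
def IsUnitVec {ι : Type*} [Fintype ι] (u : ι → ℂ) : Prop := cinner u u = 1

/-- Rank-one projection `|u⟩⟨u|`, with entries `u k * conj (u l)`. -/
def proj {ι : Type*} [Fintype ι] (u : ι → ℂ) : Matrix ι ι ℂ :=
  Matrix.of fun k l => u k * (starRingEnd ℂ) (u l)

/-- Rank-one operator `|u⟩⟨v|`, with entries `u k * conj (v l)`. -/
def outer {ι : Type*} [Fintype ι] (u v : ι → ℂ) : Matrix ι ι ℂ :=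
  Matrix.of fun k l => u k * (starRingEnd ℂ) (v l)

/-- A state: positive semidefinite matrix of trace 1. -/
def IsState {ι : Type*} [Fintype ι] (ρ : Matrix ι ι ℂ) : Prop :=
  ρ.PosSemidef ∧ ρ.trace = 1

/-- An effect: `0 ≤ E ≤ I` in the Loewner order. -/
def IsEffect {d : ℕ} (E : Matrix (Fin d) (Fin d) ℂ) : Prop :=
  E.PosSemidef ∧ (1 - E).PosSemidef

/-- Conditional state `Tr_A[ρ (E ⊗ I_B)]` of a bipartite state for an effect `E` on A:
entries `(E')_{b b'} = ∑_{a,a'} E_{a' a} ρ_{(a,b),(a',b')}`. -/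
def condStateE {dA dB : ℕ} (ρ : Matrix (Fin dA × Fin dB) (Fin dA × Fin dB) ℂ)
    (E : Matrix (Fin dA) (Fin dA) ℂ) : Matrix (Fin dB) (Fin dB) ℂ :=
  Matrix.of fun b b' => ∑ a, ∑ a', E a' a * ρ (a, b) (a', b')

/-- Conditional state `Tr_A[ρ (|α⟩⟨α| ⊗ I_B)]` for a non-degenerate projective effect:
entries `∑_{a,a'} conj (α a) * α a' * ρ_{(a,b),(a',b')}`. -/
def condState {dA dB : ℕ} (ρ : Matrix (Fin dA × Fin dB) (Fin dA × Fin dB) ℂ)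
    (α : Fin dA → ℂ) : Matrix (Fin dB) (Fin dB) ℂ :=
  Matrix.of fun b b' => ∑ a, ∑ a', (starRingEnd ℂ) (α a) * α a' * ρ (a, b) (a', b')

/-- Tensor product vector `α ⊗ β` in `ℂ^{dA} ⊗ ℂ^{dB}`. -/
def tensor2 {dA dB : ℕ} (α : Fin dA → ℂ) (β : Fin dB → ℂ) : Fin dA × Fin dB → ℂ :=
  fun p => α p.1 * β p.2

/-- Tensor product vector `α ⊗ β ⊗ γ` in `ℂ^{dA} ⊗ ℂ^{dB} ⊗ ℂ^{dC}`. -/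
def tensor3 {dA dB dC : ℕ} (α : Fin dA → ℂ) (β : Fin dB → ℂ) (γ : Fin dC → ℂ) :
    Fin dA × Fin dB × Fin dC → ℂ :=
  fun p => α p.1 * β p.2.1 * γ p.2.2

/-- Reduced state of a tripartite pure state on AB:
`(ρ_Ψ)_{(a,b),(a',b')} = ∑_c Ψ_{a,b,c} conj (Ψ_{a',b',c})`. -/
def reducedAB {dA dB dC : ℕ} (Ψ : Fin dA × Fin dB × Fin dC → ℂ) :
    Matrix (Fin dA × Fin dB) (Fin dA × Fin dB) ℂ :=
  Matrix.of fun p q => ∑ c, Ψ (p.1, p.2, c) * (starRingEnd ℂ) (Ψ (q.1, q.2, c))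

/-- Partial contraction `⟨α|Ψ⟩ ∈ ℂ^{dB} ⊗ ℂ^{dC}`, with components
`∑_a conj (α a) Ψ_{a,b,c}`. -/
def aContract {dA dB dC : ℕ} (α : Fin dA → ℂ) (Ψ : Fin dA × Fin dB × Fin dC → ℂ) :
    Fin dB × Fin dC → ℂ :=
  fun p => ∑ a, (starRingEnd ℂ) (α a) * Ψ (a, p.1, p.2)

/-- A family of vectors is orthonormal. For `n = d` this is an orthonormal basis of `ℂ^d`. -/
def OrthonormalFam {d n : ℕ} (α : Fin n → Fin d → ℂ) : Prop :=
  ∀ i j, cinner (α i) (α j) = if i = j then 1 else 0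

/-- `ρ` is unsteerable from Alice's side for non-degenerate projective measurements:
there is a finite local-hidden-state ensemble reproducing all conditional states of
every non-degenerate projective measurement (orthonormal basis) on A. -/
def Unsteerable {dA dB : ℕ} (ρ : Matrix (Fin dA × Fin dB) (Fin dA × Fin dB) ℂ) : Prop :=
  ∃ (n : ℕ) (P : Fin n → ℝ) (σ : Fin n → Matrix (Fin dB) (Fin dB) ℂ),
    (∀ ξ, 0 ≤ P ξ) ∧ (∑ ξ, P ξ = 1) ∧ (∀ ξ, IsState (σ ξ)) ∧
    ∀ α : Fin dA → Fin dA → ℂ, OrthonormalFam α →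
      ∃ Q : Fin dA → Fin n → ℝ,
        (∀ a ξ, 0 ≤ Q a ξ ∧ Q a ξ ≤ 1) ∧ (∀ ξ, ∑ a, Q a ξ = 1) ∧
        ∀ a, condState ρ (α a) = ∑ ξ, ((Q a ξ * P ξ : ℝ) : ℂ) • σ ξ

/-- `ρ` is separable: a finite convex-type combination of product states. -/
def Separable {dA dB : ℕ} (ρ : Matrix (Fin dA × Fin dB) (Fin dA × Fin dB) ℂ) : Prop :=
  ∃ (n : ℕ) (q : Fin n → ℝ) (ρA : Fin n → Matrix (Fin dA) (Fin dA) ℂ)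
    (ρB : Fin n → Matrix (Fin dB) (Fin dB) ℂ),
    (∀ k, 0 ≤ q k) ∧ (∀ k, IsState (ρA k)) ∧ (∀ k, IsState (ρB k)) ∧
    ρ = ∑ k, ((q k : ℂ)) • (ρA k ⊗ₖ ρB k)

/-- A local hidden state model for an assemblage `As`, with outcomes `A`, measurement
labels `X`, hidden states `σ` with weights `P`, and response probabilities `R`. -/
def LHSModel {dB : ℕ} {A X : Type*} [Fintype A] {n : ℕ}
    (As : A → X → Matrix (Fin dB) (Fin dB) ℂ)
    (P : Fin n → ℝ) (σ : Fin n → Matrix (Fin dB) (Fin dB) ℂ)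
    (R : A → X → Fin n → ℝ) : Prop :=
  (∀ ξ, 0 ≤ P ξ) ∧ (∑ ξ, P ξ = 1) ∧ (∀ ξ, IsState (σ ξ)) ∧
  (∀ a x ξ, 0 ≤ R a x ξ ∧ R a x ξ ≤ 1) ∧ (∀ x ξ, ∑ a, R a x ξ = 1) ∧
  (∀ a x, As a x = ∑ ξ, ((R a x ξ * P ξ : ℝ) : ℂ) • σ ξ)

/-- Standard basis vector of `ℂ^d`. -/
def stdb {d : ℕ} (a : Fin d) : Fin d → ℂ := fun i => if i = a then 1 else 0

section RankOneGram

open Matrix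

variable {m n R : Type*} [Fintype m] [Fintype n] [CommRing R] [StarRing R]
  {M : Matrix m n R} {u : m → R} {p : R}

-- `Q = 1 - |u⟩⟨u|` kills `u`, so `(Q M) (Q M)ᴴ = Q (p |u⟩⟨u|) Qᴴ = 0` and hence `Q M = 0`.
lemma eq_vecMulVec_of_mul_conjTranspose_eq_smul [PartialOrder R] [StarOrderedRing R]
    [NoZeroDivisors R] (hu : star u ⬝ᵥ u = 1) (hM : M * Mᴴ = p • vecMulVec u (star u)) :
    M = vecMulVec u (star u ᵥ* M) := by
  have hQu : (1 - vecMulVec u (star u)) * vecMulVec u (star u) = 0 := by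
    rw [sub_mul, one_mul, vecMulVec_mul_vecMulVec, hu, one_smul, sub_self]
  have hQM : (1 - vecMulVec u (star u)) * M = 0 := by
    rw [← self_mul_conjTranspose_eq_zero, conjTranspose_mul, Matrix.mul_assoc,
      ← Matrix.mul_assoc M, hM, ← Matrix.mul_assoc, Matrix.mul_smul, hQu, smul_zero,
      Matrix.zero_mul]
  rwa [Matrix.sub_mul, Matrix.one_mul, vecMulVec_mul, sub_eq_zero] at hQM

lemma star_vecMul_dotProduct_self_of_mul_conjTranspose_eq_smul (hu : star u ⬝ᵥ u = 1)
    (hM : M * Mᴴ = p • vecMulVec u (star u)) :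
    star (star u ᵥ* M) ⬝ᵥ (star u ᵥ* M) = p :=
  calc star (star u ᵥ* M) ⬝ᵥ (star u ᵥ* M)
      = star u ⬝ᵥ (M * Mᴴ) *ᵥ u := by
        rw [dotProduct_comm, star_vecMul, star_star, ← dotProduct_mulVec, mulVec_mulVec]
    _ = p := by
        rw [hM, smul_mulVec, vecMulVec_mulVec, hu]
        simp [hu]

end RankOneGram

section UnitVectors

variable {ι : Type*} [Fintype ι]

lemma cinner_eq_star_dotProduct (u v : ι → ℂ) : cinner u v = star u ⬝ᵥ v := rfl

lemma proj_eq_vecMulVec (u : ι → ℂ) : proj u = Matrix.vecMulVec u (star u) := rfl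

lemma cinner_smul_smul (c : ℂ) (u v : ι → ℂ) :
    cinner (c • u) (c • v) = Complex.normSq c * cinner u v := by
  rw [Complex.normSq_eq_conj_mul_self, cinner_eq_star_dotProduct, star_smul, smul_dotProduct,
    dotProduct_smul, smul_smul, smul_eq_mul]
  rfl

lemma cinner_self_eq_norm_sq (u : ι → ℂ) : cinner u u = (‖WithLp.toLp 2 u‖ : ℂ) ^ 2 := by
  rw [cinner_eq_star_dotProduct, dotProduct_comm]
  exact inner_self_eq_norm_sq_to_K (𝕜 := ℂ) (WithLp.toLp 2 u)

lemma IsUnitVec.nonempty {u : ι → ℂ} (hu : IsUnitVec u) : Nonempty ι := by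
  by_contra h
  rw [not_nonempty_iff] at h
  simp [IsUnitVec, cinner] at hu

lemma IsUnitVec.normSq_eq_cinner_smul_smul {u : ι → ℂ} (hu : IsUnitVec u) (c : ℂ) :
    (Complex.normSq c : ℂ) = cinner (c • u) (c • u) := by
  rw [cinner_smul_smul, show cinner u u = 1 from hu, mul_one]

lemma exists_isUnitVec_smul_eq [Nonempty ι] (g : ι → ℂ) :
    ∃ (c : ℂ) (γ : ι → ℂ), IsUnitVec γ ∧ c • γ = g := by
  rcases eq_or_ne g 0 with rfl | hg
  · obtain ⟨i⟩ := ‹Nonempty ι›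
    exact ⟨0, Pi.single i 1, by simp [IsUnitVec, cinner_eq_star_dotProduct], zero_smul ..⟩
  · have hnorm : (‖WithLp.toLp 2 g‖ : ℂ) ≠ 0 := by simpa using hg
    refine ⟨‖WithLp.toLp 2 g‖, (‖WithLp.toLp 2 g‖ : ℂ)⁻¹ • g, ?_, smul_inv_smul₀ hnorm g⟩
    rw [IsUnitVec, cinner_smul_smul, cinner_self_eq_norm_sq, map_inv₀, Complex.normSq_ofReal]
    push_cast
    field_simp

end UnitVectors

section Completeness

variable {d : ℕ} {α : Fin d → Fin d → ℂ}

lemma OrthonormalFam.transpose_mem_unitaryGroup (hα : OrthonormalFam α) :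
    (Matrix.of α).transpose ∈ Matrix.unitaryGroup (Fin d) ℂ := by
  rw [Matrix.mem_unitaryGroup_iff']
  ext i j
  exact (hα i j).trans (Matrix.one_apply ..).symm

lemma OrthonormalFam.sum_cinner_smul (hα : OrthonormalFam α) (v : Fin d → ℂ) :
    ∑ i, cinner (α i) v • α i = v := by
  set U := (Matrix.of α).transpose
  calc ∑ i, cinner (α i) v • α i = U.mulVec ((star U).mulVec v) := by
        rw [Matrix.mulVec_eq_sum]
        simp only [op_smul_eq_smul]
        rfl
    _ = v := by
        rw [Matrix.mulVec_mulVec, Matrix.mem_unitaryGroup_iff.mp hα.transpose_mem_unitaryGroup,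
          Matrix.one_mulVec]

end Completeness

section Contraction

variable {dA dB dC : ℕ}

/-- The partial contraction `⟨α|Ψ⟩`, read as an operator from `C` to `B`: rows are indexed by `B`
and columns by `C`, so that its left Gram matrix is the conditional state on `B`. -/
def contractMatrix (α : Fin dA → ℂ) (Ψ : Fin dA × Fin dB × Fin dC → ℂ) :
    Matrix (Fin dB) (Fin dC) ℂ :=
  Matrix.of fun b c => aContract α Ψ (b, c)

lemma OrthonormalFam.sum_mul_contractMatrix {α : Fin dA → Fin dA → ℂ} (hα : OrthonormalFam α)
    (Ψ : Fin dA × Fin dB × Fin dC → ℂ) (x : Fin dA) (b : Fin dB) (c : Fin dC) :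
    ∑ a, α a x * contractMatrix (α a) Ψ b c = Ψ (x, b, c) :=
  calc ∑ a, α a x * contractMatrix (α a) Ψ b c
      = (∑ a, cinner (α a) (fun y => Ψ (y, b, c)) • α a) x := by
        rw [Finset.sum_apply]
        exact Finset.sum_congr rfl fun a _ => mul_comm ..
    _ = Ψ (x, b, c) := congrFun (hα.sum_cinner_smul fun y => Ψ (y, b, c)) x

lemma condState_reducedAB (Ψ : Fin dA × Fin dB × Fin dC → ℂ) (α : Fin dA → ℂ) :
    condState (reducedAB Ψ) α = contractMatrix α Ψ * (contractMatrix α Ψ).conjTranspose := by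
  ext b b'
  calc ∑ a, ∑ a', (starRingEnd ℂ) (α a) * α a' *
        ∑ c, Ψ (a, b, c) * (starRingEnd ℂ) (Ψ (a', b', c))
      = ∑ c, ∑ a, ∑ a', ((starRingEnd ℂ) (α a) * Ψ (a, b, c)) *
          (α a' * (starRingEnd ℂ) (Ψ (a', b', c))) := by
        simp only [Finset.mul_sum, mul_mul_mul_comm,
          Finset.sum_comm (t := (Finset.univ : Finset (Fin dC)))]
    _ = ∑ c, contractMatrix α Ψ b c * star (contractMatrix α Ψ b' c) := by
        simp [contractMatrix, aContract, Finset.sum_mul_sum]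

lemma exists_eq_sum_tensor3_of_condState {Ψ : Fin dA × Fin dB × Fin dC → ℂ}
    {α : Fin dA → Fin dA → ℂ} (hα : OrthonormalFam α)
    {β : Fin dA → Fin dB → ℂ} (hβ : ∀ a, IsUnitVec (β a)) {p : Fin dA → ℂ}
    (h : ∀ a, condState (reducedAB Ψ) (α a) = p a • proj (β a)) :
    ∃ g : Fin dA → Fin dC → ℂ,
      (∀ a, cinner (g a) (g a) = p a) ∧ Ψ = ∑ a, tensor3 (α a) (β a) (g a) := by
  have hGram a : contractMatrix (α a) Ψ * (contractMatrix (α a) Ψ).conjTranspose =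
      p a • Matrix.vecMulVec (β a) (star (β a)) := by
    rw [← condState_reducedAB, h, proj_eq_vecMulVec]
  refine ⟨fun a => Matrix.vecMul (star (β a)) (contractMatrix (α a) Ψ),
    fun a => star_vecMul_dotProduct_self_of_mul_conjTranspose_eq_smul (hβ a) (hGram a), ?_⟩
  ext ⟨x, b, c⟩
  rw [← hα.sum_mul_contractMatrix Ψ, Finset.sum_apply]
  refine Finset.sum_congr rfl fun a _ => ?_
  rw [congrFun₂ (eq_vecMulVec_of_mul_conjTranspose_eq_smul (hβ a) (hGram a)) b c]
  exact (mul_assoc ..).symm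

lemma tensor3_smul (c : ℂ) (α : Fin dA → ℂ) (β : Fin dB → ℂ) (γ : Fin dC → ℂ) :
    tensor3 α β (c • γ) = c • tensor3 α β γ :=
  funext fun _ => mul_left_comm ..

end Contraction

theorem stmt4_general {dA dB dC : ℕ} [Nonempty (Fin dC)] (Ψ : Fin dA × Fin dB × Fin dC → ℂ)
    (α : Fin dA → Fin dA → ℂ) (hα : OrthonormalFam α)
    (β : Fin dA → Fin dB → ℂ) (hβ : ∀ a, IsUnitVec (β a)) (p : Fin dA → ℝ)
    (h : ∀ a, condState (reducedAB Ψ) (α a) = (p a : ℂ) • proj (β a)) :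
    ∃ (γ : Fin dA → Fin dC → ℂ) (c : Fin dA → ℂ),
      (∀ a, IsUnitVec (γ a)) ∧ (∀ a, Complex.normSq (c a) = p a) ∧
      Ψ = ∑ a, c a • tensor3 (α a) (β a) (γ a) := by
  obtain ⟨g, hg, hΨg⟩ := exists_eq_sum_tensor3_of_condState hα hβ h
  choose c γ hγ hcγ using fun a => exists_isUnitVec_smul_eq (g a)
  refine ⟨γ, c, hγ, fun a => ?_, ?_⟩
  · have hnormSq : (Complex.normSq (c a) : ℂ) = p a := by
      rw [(hγ a).normSq_eq_cinner_smul_smul, hcγ, hg]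
    exact_mod_cast hnormSq
  · simp only [hΨg, ← hcγ, tensor3_smul]

/-- if a non-degenerate projective measurement (orthonormal basis `α`)
steers Bob's part of the reduced state of `Ψ` to pure states `|β_a⟩⟨β_a|` with
probabilities `p_a > 0`, then `Ψ = ∑_a c_a α_a⊗β_a⊗γ_a` with unit `γ_a`, `|c_a|² = p_a`. -/
theorem stmt4 {dA dB dC : ℕ} (Ψ : Fin dA × Fin dB × Fin dC → ℂ) (hΨ : IsUnitVec Ψ)
    (α : Fin dA → Fin dA → ℂ) (hα : OrthonormalFam α)
    (β : Fin dA → Fin dB → ℂ) (hβ : ∀ a, IsUnitVec (β a))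
    (p : Fin dA → ℝ) (hp : ∀ a, 0 < p a)
    (h : ∀ a, condState (reducedAB Ψ) (α a) = (p a : ℂ) • proj (β a)) :
    ∃ (γ : Fin dA → Fin dC → ℂ) (c : Fin dA → ℂ),
      (∀ a, IsUnitVec (γ a)) ∧ (∀ a, Complex.normSq (c a) = p a) ∧
      Ψ = ∑ a, c a • tensor3 (α a) (β a) (γ a) := by
  have : Nonempty (Fin dC) := hΨ.nonempty.map fun x => x.2.2
  exact stmt4_general Ψ α hα β hβ p h

end

end EPR
end

section
/- Let ρ be a bipartite state on ℂ^{dA}⊗ℂ^{dB}. Suppose there are unit vectors α_1,…,α_n in ℂ^{dA}, orthonormal vectors β_1,…,β_n in ℂ^{dB}, and p_1,…,p_n > 0 with Σ_{i=1}^n p_i = 1 such that Tr_A[ρ(|α_i⟩⟨α_i|⊗I_B)] = p_i|β_i⟩⟨β_i| for all i. Suppose further there are unit vectors α ∈ ℂ^{dA}, β ∈ ℂ^{dB} and p > 0 with Tr_A[ρ(|α⟩⟨α|⊗I_B)] = p|β⟩⟨β|. Then for every nonzero vector β' in the linear span of {β_i : ⟨β_i, β⟩ ≠ 0} there exist a unit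 vector α' ∈ ℂ^{dA} and q > 0 such that Tr_A[ρ(|α'⟩⟨α'|⊗I_B)] = q |β'⟩⟨β'|/‖β'‖², i.e. Alice can steer Bob's system to every pure state in span{β_i : ⟨β_i, β⟩ ≠ 0}. -/
/-!
Since the `β i` are orthonormal and the `α i` are unit vectors, the product vectors `α i ⊗ β i` are
orthonormal, and `⟨α i ⊗ β i|ρ|α i ⊗ β i⟩ = p i`. These numbers add up to `1 = tr ρ`, so `ρ` is
supported on the span of the `α i ⊗ β i`. As `⟨α i ⊗ β j|ρ|α i ⊗ β j⟩ = 0` for `i ≠ j`, the `α i`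
are orthonormal too.

On this span the operators `F = ∑ t i |α i⟩⟨α i|` of Alice and `G = ∑ t i |β i⟩⟨β i|` of Bob have
the same effect: `(F ⊗ 1) ρ (F ⊗ 1)ᴴ = (1 ⊗ G) ρ (1 ⊗ G)ᴴ`. Replacing `α` by `Fᴴ α` therefore
replaces Bob's conditional state `p |β⟩⟨β|` by `p |Gβ⟩⟨Gβ|`, and `Gβ = ∑ t i ⟨β i, β⟩ β i` runs
through the span of the `β i` with `⟨β i, β⟩ ≠ 0` as `t` varies.
-/

open scoped BigOperators Kronecker Classical ComplexOrder

namespace EPR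

noncomputable section

open Matrix

theorem exists_sum_mul_smul_eq_of_mem_span {ι K E : Type*} [Fintype ι] [Field K] [AddCommGroup E]
    [Module K E] {e : ι → E} {c : ι → K} {w : E}
    (hw : w ∈ Submodule.span K (e '' {i | c i ≠ 0})) :
    ∃ t : ι → K, ∑ i, (t i * c i) • e i = w := by
  induction hw using Submodule.span_induction with
  | mem w hw =>
    obtain ⟨i, hi, rfl⟩ := hw
    exact ⟨Pi.single i (c i)⁻¹, by simp [Pi.single_apply, inv_mul_cancel₀ hi]⟩
  | zero => exact ⟨0, by simp⟩
  | add w₁ w₂ _ _ h₁ h₂ =>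
    obtain ⟨t₁, rfl⟩ := h₁
    obtain ⟨t₂, rfl⟩ := h₂
    exact ⟨t₁ + t₂, by simp [add_mul, add_smul, Finset.sum_add_distrib]⟩
  | smul z w _ hw =>
    obtain ⟨t, rfl⟩ := hw
    exact ⟨z • t, by simp [Finset.smul_sum, smul_smul, mul_assoc]⟩

section Vectors

variable {m κ : Type*} [Fintype κ]

theorem cinner_eq_dotProduct (u v : κ → ℂ) : cinner u v = star u ⬝ᵥ v := rfl

theorem cinner_smul_right (c : ℂ) (u v : κ → ℂ) : cinner u (c • v) = c * cinner u v :=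
  dotProduct_smul c (star u) v

theorem cinner_smul_left (c : ℂ) (u v : κ → ℂ) : cinner (c • u) v = star c * cinner u v := by
  rw [cinner_eq_dotProduct, star_smul, smul_dotProduct, smul_eq_mul, ← cinner_eq_dotProduct]

theorem exists_pos_cinner_self_eq {u : κ → ℂ} (hu : u ≠ 0) :
    ∃ r : ℝ, 0 < r ∧ cinner u u = r := by
  obtain ⟨r, hr, h⟩ := RCLike.pos_iff_exists_ofReal.1 (dotProduct_star_self_pos_iff.2 hu)
  exact ⟨r, hr, h.symm⟩

theorem proj_mulVec (u v : κ → ℂ) : proj u *ᵥ v = cinner u v • u := by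
  ext k
  simp [proj, cinner, mulVec, dotProduct, Finset.mul_sum, mul_comm, mul_left_comm]

theorem conjTranspose_proj (u : κ → ℂ) : (proj u)ᴴ = proj u := by
  ext k l
  simp [proj, mul_comm]

theorem mul_proj (M : Matrix m κ ℂ) (u : κ → ℂ) :
    M * proj u = vecMulVec (M *ᵥ u) (star u) :=
  mul_vecMulVec M u (star u)

theorem mul_proj_mul_conjTranspose [Fintype m] (M : Matrix m κ ℂ) (u : κ → ℂ) :
    M * proj u * Mᴴ = proj (M *ᵥ u) := by
  rw [mul_proj, vecMulVec_mul, ← star_mulVec]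
  rfl

theorem trace_mul_proj (M : Matrix κ κ ℂ) (u : κ → ℂ) :
    (M * proj u).trace = cinner u (M *ᵥ u) := by
  rw [mul_proj, trace_vecMulVec, dotProduct_comm, cinner_eq_dotProduct]

end Vectors

section DiagonalOperators

variable {ι κ : Type*} [Fintype ι] [Fintype κ]

/-- The operator `∑ i, t i |e i⟩⟨e i|`. For an orthonormal family `e` it is diagonal with
eigenvalues `t i`, and `diagOp e 1` is the orthogonal projection onto the span of `e`. -/
def diagOp (e : ι → κ → ℂ) (t : ι → ℂ) : Matrix κ κ ℂ :=
  ∑ i, t i • proj (e i)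

theorem diagOp_mulVec (e : ι → κ → ℂ) (t : ι → ℂ) (v : κ → ℂ) :
    diagOp e t *ᵥ v = ∑ i, (t i * cinner (e i) v) • e i := by
  simp only [diagOp, sum_mulVec, smul_mulVec, proj_mulVec, smul_smul]

theorem conjTranspose_diagOp (e : ι → κ → ℂ) (t : ι → ℂ) :
    (diagOp e t)ᴴ = diagOp e (star t) := by
  simp only [diagOp, conjTranspose_sum, conjTranspose_smul, conjTranspose_proj, Pi.star_apply]

theorem mul_diagOp_congr {m : Type*} {e : ι → κ → ℂ} {M N : Matrix m κ ℂ}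
    (h : ∀ i, M *ᵥ e i = N *ᵥ e i) (t : ι → ℂ) : M * diagOp e t = N * diagOp e t := by
  simp only [diagOp, Matrix.mul_sum, Matrix.mul_smul, mul_proj, h]

theorem trace_mul_diagOp_one (M : Matrix κ κ ℂ) (e : ι → κ → ℂ) :
    (M * diagOp e 1).trace = ∑ i, cinner (e i) (M *ᵥ e i) := by
  simp only [diagOp, Pi.one_apply, one_smul, Matrix.mul_sum, trace_sum, trace_mul_proj]

variable [DecidableEq ι] {e : ι → κ → ℂ}

theorem diagOp_mulVec_self (he : ∀ i j, cinner (e i) (e j) = if i = j then 1 else 0)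
    (t : ι → ℂ) (j : ι) : diagOp e t *ᵥ e j = t j • e j := by
  simp [diagOp_mulVec, he]

theorem isStarProjection_diagOp_one
    (he : ∀ i j, cinner (e i) (e j) = if i = j then 1 else 0) :
    IsStarProjection (diagOp e 1) where
  isIdempotentElem := by
    have hfix (i : ι) : diagOp e 1 *ᵥ e i = e i := by
      rw [diagOp_mulVec_self he, Pi.one_apply, one_smul]
    classical
    exact (mul_diagOp_congr (fun i => (hfix i).trans (one_mulVec _).symm) 1).trans
      (Matrix.one_mul _)
  isSelfAdjoint := by
    rw [IsSelfAdjoint, star_eq_conjTranspose, conjTranspose_diagOp, star_one]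

end DiagonalOperators

section Support

variable {m κ 𝕜 : Type*} [Fintype κ] [RCLike 𝕜] {ρ P : Matrix κ κ 𝕜}

theorem mul_eq_zero_of_conjTranspose_mul_mul_eq_zero {M : Matrix κ m 𝕜} (hρ : ρ.PosSemidef)
    (h : Mᴴ * ρ * M = 0) : ρ * M = 0 := by
  ext k i
  have hcol : star (M.col i) ⬝ᵥ ρ *ᵥ M.col i = 0 := by
    rw [dotProduct_mulVec]
    exact congrFun (congrFun h i) i
  exact congrFun ((hρ.dotProduct_mulVec_zero_iff _).1 hcol) k

theorem mul_eq_self_of_trace_mul_eq_trace (hρ : ρ.PosSemidef) (hP : IsStarProjection P)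
    (htr : (ρ * P).trace = ρ.trace) : ρ * P = ρ := by
  classical
  have hQ : (1 - P)ᴴ = 1 - P := hP.one_sub.isSelfAdjoint
  have htrQ : ((1 - P)ᴴ * ρ * (1 - P)).trace = 0 := by
    rw [trace_mul_cycle, hQ, hP.one_sub.isIdempotentElem.eq, trace_mul_comm, Matrix.mul_sub,
      Matrix.mul_one, trace_sub, htr, sub_self]
  have hρQ : ρ * (1 - P) = 0 := mul_eq_zero_of_conjTranspose_mul_mul_eq_zero hρ
    ((hρ.conjTranspose_mul_mul_same (1 - P)).trace_eq_zero_iff.1 htrQ)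
  rw [Matrix.mul_sub, Matrix.mul_one, sub_eq_zero] at hρQ
  exact hρQ.symm

theorem mul_mul_conjTranspose_congr {R : Type*} [Semiring R] [StarRing R] {ρ P : Matrix κ κ R}
    {M N : Matrix m κ R} (hρ : ρ.IsHermitian) (hP : P.IsHermitian) (hρP : ρ * P = ρ)
    (hMN : M * P = N * P) : M * ρ * Mᴴ = N * ρ * Nᴴ := by
  have hPρ : P * ρ = ρ := by
    simpa only [conjTranspose_mul, hρ.eq, hP.eq] using congrArg conjTranspose hρP
  have hMρ : M * ρ = N * ρ := by
    rw [← hPρ, ← Matrix.mul_assoc, hMN, Matrix.mul_assoc]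
  have hρM : ρ * Mᴴ = ρ * Nᴴ := by
    simpa only [conjTranspose_mul, hρ.eq] using congrArg conjTranspose hMρ
  rw [hMρ, Matrix.mul_assoc, hρM, Matrix.mul_assoc]

end Support

section ConditionalStates

variable {dA dB : ℕ}

theorem cinner_tensor2 (u u' : Fin dA → ℂ) (w w' : Fin dB → ℂ) :
    cinner (tensor2 u w) (tensor2 u' w') = cinner u u' * cinner w w' := by
  simp only [cinner, tensor2, Fintype.sum_prod_type, Finset.sum_mul_sum, map_mul]
  exact Finset.sum_congr rfl fun _ _ => Finset.sum_congr rfl fun _ _ => by ring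

theorem kronecker_mulVec_tensor2 (F : Matrix (Fin dA) (Fin dA) ℂ) (G : Matrix (Fin dB) (Fin dB) ℂ)
    (v : Fin dA → ℂ) (w : Fin dB → ℂ) :
    (F ⊗ₖ G) *ᵥ tensor2 v w = tensor2 (F *ᵥ v) (G *ᵥ w) := by
  ext x
  simp only [tensor2, mulVec, dotProduct, kroneckerMap_apply, Fintype.sum_prod_type,
    Finset.sum_mul_sum]
  exact Finset.sum_congr rfl fun _ _ => Finset.sum_congr rfl fun _ _ => by ring

theorem smul_tensor2 (c : ℂ) (v : Fin dA → ℂ) (w : Fin dB → ℂ) :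
    tensor2 (c • v) w = c • tensor2 v w := by
  ext x
  simp [tensor2, mul_assoc]

theorem tensor2_smul (c : ℂ) (v : Fin dA → ℂ) (w : Fin dB → ℂ) :
    tensor2 v (c • w) = c • tensor2 v w := by
  ext x
  simp [tensor2, mul_left_comm]

/-- The operator `|v⟩ ⊗ 1 : ℂ^dB → ℂ^dA ⊗ ℂ^dB`, sending `w` to `v ⊗ w`. Conjugating `ρ` with it
gives the conditional state for `v`. -/
def ketTensorOne (dB : ℕ) (v : Fin dA → ℂ) : Matrix (Fin dA × Fin dB) (Fin dB) ℂ :=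
  Matrix.of fun x b => v x.1 * (1 : Matrix (Fin dB) (Fin dB) ℂ) x.2 b

theorem ketTensorOne_mulVec (v : Fin dA → ℂ) (w : Fin dB → ℂ) :
    ketTensorOne dB v *ᵥ w = tensor2 v w := by
  ext x
  simp [ketTensorOne, tensor2, mulVec, dotProduct, one_apply]

theorem ketTensorOne_smul (c : ℂ) (v : Fin dA → ℂ) :
    ketTensorOne dB (c • v) = c • ketTensorOne dB v := by
  ext x b
  simp [ketTensorOne, mul_assoc]

theorem kronecker_mul_ketTensorOne (F : Matrix (Fin dA) (Fin dA) ℂ)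
    (G : Matrix (Fin dB) (Fin dB) ℂ) (v : Fin dA → ℂ) :
    (F ⊗ₖ G) * ketTensorOne dB v = ketTensorOne dB (F *ᵥ v) * G := by
  refine ext_of_mulVec_single fun b => ?_
  rw [← mulVec_mulVec, ← mulVec_mulVec, ketTensorOne_mulVec, ketTensorOne_mulVec,
    kronecker_mulVec_tensor2]

variable {ρ : Matrix (Fin dA × Fin dB) (Fin dA × Fin dB) ℂ}

theorem condState_eq_conj (ρ : Matrix (Fin dA × Fin dB) (Fin dA × Fin dB) ℂ) (v : Fin dA → ℂ) :
    condState ρ v = (ketTensorOne dB v)ᴴ * ρ * ketTensorOne dB v := by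
  ext b b'
  simp only [condState, ketTensorOne, of_apply, mul_apply, conjTranspose_apply, one_apply,
    Fintype.sum_prod_type]
  simp only [mul_ite, mul_one, mul_zero, apply_ite star, star_zero, ite_mul, zero_mul,
    Finset.sum_ite_eq', Finset.mem_univ, if_true, Finset.sum_mul]
  rw [Finset.sum_comm]
  exact Finset.sum_congr rfl fun _ _ => Finset.sum_congr rfl fun _ _ => by
    rw [RCLike.star_def]; ring

theorem cinner_condState_mulVec (ρ : Matrix (Fin dA × Fin dB) (Fin dA × Fin dB) ℂ)
    (v : Fin dA → ℂ) (w : Fin dB → ℂ) :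
    cinner w (condState ρ v *ᵥ w) = cinner (tensor2 v w) (ρ *ᵥ tensor2 v w) := by
  rw [condState_eq_conj, ← mulVec_mulVec, ← mulVec_mulVec, ketTensorOne_mulVec,
    cinner_eq_dotProduct, dotProduct_mulVec, ← star_mulVec, ketTensorOne_mulVec,
    cinner_eq_dotProduct]

theorem condState_smul (c : ℂ) (v : Fin dA → ℂ) :
    condState ρ (c • v) = (c * star c) • condState ρ v := by
  simp only [condState_eq_conj, ketTensorOne_smul, conjTranspose_smul, Matrix.smul_mul,
    Matrix.mul_smul, smul_smul]

theorem condState_kronecker_conj (F : Matrix (Fin dA) (Fin dA) ℂ) (G : Matrix (Fin dB) (Fin dB) ℂ)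
    (v : Fin dA → ℂ) :
    condState ((F ⊗ₖ G) * ρ * (F ⊗ₖ G)ᴴ) v = G * condState ρ (Fᴴ *ᵥ v) * Gᴴ := by
  have hket : (F ⊗ₖ G)ᴴ * ketTensorOne dB v = ketTensorOne dB (Fᴴ *ᵥ v) * Gᴴ := by
    rw [conjTranspose_kronecker, kronecker_mul_ketTensorOne]
  have hbra : (ketTensorOne dB v)ᴴ * (F ⊗ₖ G) = G * (ketTensorOne dB (Fᴴ *ᵥ v))ᴴ := by
    simpa only [conjTranspose_mul, conjTranspose_conjTranspose] using congrArg conjTranspose hket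
  calc condState ((F ⊗ₖ G) * ρ * (F ⊗ₖ G)ᴴ) v
      = (ketTensorOne dB v)ᴴ * (F ⊗ₖ G) * ρ * ((F ⊗ₖ G)ᴴ * ketTensorOne dB v) := by
        simp only [condState_eq_conj, Matrix.mul_assoc]
    _ = G * condState ρ (Fᴴ *ᵥ v) * Gᴴ := by
        simp only [hket, hbra, condState_eq_conj, Matrix.mul_assoc]

theorem exists_isUnitVec_condState_eq_smul (ρ : Matrix (Fin dA × Fin dB) (Fin dA × Fin dB) ℂ)
    {v : Fin dA → ℂ} (hv : v ≠ 0) :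
    ∃ (u : Fin dA → ℂ) (s : ℝ), IsUnitVec u ∧ 0 < s ∧ condState ρ u = (s : ℂ) • condState ρ v := by
  obtain ⟨r, hr, hvr⟩ := exists_pos_cinner_self_eq hv
  have hsq : (√r : ℂ)⁻¹ * star ((√r : ℂ)⁻¹) = (r⁻¹ : ℝ) := by
    rw [star_inv₀, RCLike.star_def, Complex.conj_ofReal, ← mul_inv, ← Complex.ofReal_mul,
      Real.mul_self_sqrt hr.le, Complex.ofReal_inv]
  refine ⟨(√r : ℂ)⁻¹ • v, r⁻¹, ?_, inv_pos.2 hr, by rw [condState_smul, hsq]⟩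
  rw [IsUnitVec, cinner_smul_right, cinner_smul_left, ← mul_assoc, hsq, hvr, ← Complex.ofReal_mul,
    inv_mul_cancel₀ hr.ne', Complex.ofReal_one]

theorem ne_zero_of_condState_eq_smul_proj {v : Fin dA → ℂ} {w : Fin dB → ℂ} {c : ℂ}
    (h : condState ρ v = c • proj w) (hc : c ≠ 0) (hw : w ≠ 0) : v ≠ 0 := by
  rintro rfl
  obtain ⟨b, hb⟩ := Function.ne_iff.1 hw
  have hbb := congrFun (congrFun h b) b
  simp [condState, proj, hc, show w b ≠ 0 from hb] at hbb

end ConditionalStates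

section Steering

variable {dA dB n : ℕ} {ρ : Matrix (Fin dA × Fin dB) (Fin dA × Fin dB) ℂ}
  {α : Fin n → Fin dA → ℂ} {β : Fin n → Fin dB → ℂ} {p : Fin n → ℂ}

theorem cinner_mulVec_tensor2_of_condState_eq (hβ : OrthonormalFam β)
    (h : ∀ i, condState ρ (α i) = p i • proj (β i)) (i j : Fin n) :
    cinner (tensor2 (α i) (β j)) (ρ *ᵥ tensor2 (α i) (β j)) = if i = j then p i else 0 := by
  rw [← cinner_condState_mulVec, h, smul_mulVec, proj_mulVec, cinner_smul_right, cinner_smul_right,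
    hβ i j, hβ j i]
  rcases eq_or_ne i j with rfl | hij
  · simp
  · simp [hij]

/-- The orthogonal projection onto the span of the product vectors `α i ⊗ β i`, when these are
orthonormal. -/
def pairProj (α : Fin n → Fin dA → ℂ) (β : Fin n → Fin dB → ℂ) :
    Matrix (Fin dA × Fin dB) (Fin dA × Fin dB) ℂ :=
  diagOp (fun i => tensor2 (α i) (β i)) 1

theorem isStarProjection_pairProj (hα : ∀ i, IsUnitVec (α i)) (hβ : OrthonormalFam β) :
    IsStarProjection (pairProj α β) := by
  refine isStarProjection_diagOp_one fun i j => ?_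
  rw [cinner_tensor2, hβ i j]
  rcases eq_or_ne i j with rfl | hij
  · rw [if_pos rfl, mul_one, hα i]
  · rw [if_neg hij, mul_zero]

theorem pairProj_mulVec_tensor2 (hβ : OrthonormalFam β) (v : Fin dA → ℂ) (j : Fin n) :
    pairProj α β *ᵥ tensor2 v (β j) = cinner (α j) v • tensor2 (α j) (β j) := by
  simp [pairProj, diagOp_mulVec, cinner_tensor2, hβ _ j]

theorem mul_pairProj_eq_self (hρ : ρ.PosSemidef) (hα : ∀ i, IsUnitVec (α i))
    (hβ : OrthonormalFam β) (h : ∀ i, condState ρ (α i) = p i • proj (β i))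
    (hp : ∑ i, p i = ρ.trace) : ρ * pairProj α β = ρ := by
  refine mul_eq_self_of_trace_mul_eq_trace hρ (isStarProjection_pairProj hα hβ) ?_
  rw [pairProj, trace_mul_diagOp_one, ← hp]
  exact Finset.sum_congr rfl fun i _ =>
    (cinner_mulVec_tensor2_of_condState_eq hβ h i i).trans (if_pos rfl)

theorem orthonormalFam_of_mul_pairProj_eq_self (hρ : ρ.PosSemidef) (hα : ∀ i, IsUnitVec (α i))
    (hβ : OrthonormalFam β) (hp : ∀ i, p i ≠ 0)
    (h : ∀ i, condState ρ (α i) = p i • proj (β i)) (hsupp : ρ * pairProj α β = ρ) :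
    OrthonormalFam α := by
  intro j i
  split_ifs with hij
  · exact hij ▸ hα j
  have hmixed : ρ *ᵥ tensor2 (α i) (β j) = 0 := (hρ.dotProduct_mulVec_zero_iff _).1 <|
    (cinner_mulVec_tensor2_of_condState_eq hβ h i j).trans (if_neg (Ne.symm hij))
  have hpaired : ρ *ᵥ tensor2 (α j) (β j) ≠ 0 := by
    intro hzero
    have hpj := cinner_mulVec_tensor2_of_condState_eq hβ h j j
    rw [hzero, cinner_eq_dotProduct, dotProduct_zero, if_pos rfl] at hpj
    exact hp j hpj.symm
  rw [← hsupp, ← mulVec_mulVec, pairProj_mulVec_tensor2 hβ, mulVec_smul] at hmixed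
  exact (smul_eq_zero.1 hmixed).resolve_right hpaired

theorem diagOp_kronecker_one_mul_pairProj (hα : OrthonormalFam α) (hβ : OrthonormalFam β)
    (t : Fin n → ℂ) :
    (diagOp α t ⊗ₖ 1) * pairProj α β = (1 ⊗ₖ diagOp β t) * pairProj α β :=
  mul_diagOp_congr (fun i => by
    rw [kronecker_mulVec_tensor2, kronecker_mulVec_tensor2, diagOp_mulVec_self hα,
      diagOp_mulVec_self hβ, one_mulVec, one_mulVec, smul_tensor2, tensor2_smul]) 1

theorem condState_diagOp_conjTranspose_mulVec (hρ : ρ.IsHermitian) (hα : OrthonormalFam α)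
    (hβ : OrthonormalFam β) (hsupp : ρ * pairProj α β = ρ) (t : Fin n → ℂ) (v : Fin dA → ℂ) :
    condState ρ ((diagOp α t)ᴴ *ᵥ v) = diagOp β t * condState ρ v * (diagOp β t)ᴴ := by
  have hP : (pairProj α β).IsHermitian :=
    (isStarProjection_pairProj (fun i => (hα i i).trans (if_pos rfl)) hβ).isSelfAdjoint
  have hconj := congrArg (condState · v) <| mul_mul_conjTranspose_congr hρ hP hsupp
    (diagOp_kronecker_one_mul_pairProj hα hβ t)
  simpa only [condState_kronecker_conj, conjTranspose_one, one_mulVec, Matrix.one_mul,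
    Matrix.mul_one] using hconj

theorem exists_condState_eq_smul_proj_of_mem_span (hρ : ρ.IsHermitian) (hα : OrthonormalFam α)
    (hβ : OrthonormalFam β) (hsupp : ρ * pairProj α β = ρ) {v : Fin dA → ℂ} {w w' : Fin dB → ℂ}
    {c : ℂ} (hv : condState ρ v = c • proj w)
    (hw' : w' ∈ Submodule.span ℂ (β '' {i | cinner (β i) w ≠ 0})) :
    ∃ v' : Fin dA → ℂ, condState ρ v' = c • proj w' := by
  obtain ⟨t, rfl⟩ := exists_sum_mul_smul_eq_of_mem_span hw'
  refine ⟨(diagOp α t)ᴴ *ᵥ v, ?_⟩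
  rw [condState_diagOp_conjTranspose_mulVec hρ hα hβ hsupp, hv, Matrix.mul_smul, Matrix.smul_mul,
    mul_proj_mul_conjTranspose, diagOp_mulVec]

end Steering

/-- under the hypotheses of Theorem 1 of the paper, Alice can steer Bob's
system to every pure state in `span {β_i : ⟨β_i, β⟩ ≠ 0}`. -/
theorem stmt8 {dA dB n : ℕ} (ρ : Matrix (Fin dA × Fin dB) (Fin dA × Fin dB) ℂ)
    (hρ : IsState ρ)
    (α : Fin n → Fin dA → ℂ) (hα : ∀ i, IsUnitVec (α i))
    (β : Fin n → Fin dB → ℂ) (hβ : OrthonormalFam β)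
    (p : Fin n → ℝ) (hp : ∀ i, 0 < p i) (hsum : ∑ i, p i = 1)
    (h : ∀ i, condState ρ (α i) = (p i : ℂ) • proj (β i))
    (αv : Fin dA → ℂ) (hαv : IsUnitVec αv) (βv : Fin dB → ℂ) (hβv : IsUnitVec βv)
    (pv : ℝ) (hpv : 0 < pv) (hc : condState ρ αv = (pv : ℂ) • proj βv) :
    ∀ β' : Fin dB → ℂ, β' ≠ 0 →
      β' ∈ Submodule.span ℂ (β '' {i | cinner (β i) βv ≠ 0}) →
      ∃ (α' : Fin dA → ℂ) (q : ℝ), IsUnitVec α' ∧ 0 < q ∧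
        condState ρ α' = ((q : ℂ) / cinner β' β') • proj β' := by
  intro β' hβ' hspan
  have hsupp : ρ * pairProj α β = ρ :=
    mul_pairProj_eq_self hρ.1 hα hβ h (by rw [hρ.2, ← Complex.ofReal_sum, hsum, Complex.ofReal_one])
  have hαorth : OrthonormalFam α :=
    orthonormalFam_of_mul_pairProj_eq_self hρ.1 hα hβ
      (fun i => Complex.ofReal_ne_zero.2 (hp i).ne') h hsupp
  obtain ⟨v, hv⟩ :=
    exists_condState_eq_smul_proj_of_mem_span hρ.1.isHermitian hαorth hβ hsupp hc hspan
  have hv0 : v ≠ 0 := ne_zero_of_condState_eq_smul_proj hv (Complex.ofReal_ne_zero.2 hpv.ne') hβ'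
  obtain ⟨α', s, hα', hs, hα's⟩ := exists_isUnitVec_condState_eq_smul ρ hv0
  obtain ⟨r, hr, hβ'r⟩ := exists_pos_cinner_self_eq hβ'
  refine ⟨α', s * pv * r, hα', by positivity, ?_⟩
  rw [hα's, hv, smul_smul, hβ'r, Complex.ofReal_mul, Complex.ofReal_mul,
    mul_div_cancel_right₀ _ (Complex.ofReal_ne_zero.2 hr.ne')]

end

end EPR
end

section
/- Let Ψ be a unit vector in ℂ^{dA}⊗ℂ^{dB}⊗ℂ^{dC} with reduced state ρ_Ψ on AB, and suppose Ψ = Σ_{i=1}^n c_i α_i⊗β_i⊗γ_i where {α_i} are orthonormal in ℂ^{dA}, {β_i} are orthonormal in ℂ^{dB}, the γ_i are unit vectors in ℂ^{dC}, and all c_i ≠ 0 with Σ_i |c_i|² = 1. If there exist unit vectors α ∈ ℂ^{dA}, β ∈ ℂ^{dB}, γ ∈ ℂ^{dC} and c ≠ 0 such that ⟨α|Ψ⟩ = c(β⊗γ), then for every index i with ⟨β_i, β⟩ ≠ 0 one has |γ_i⟩⟨γ_i| = |γ⟩⟨γ|; consequently, writing S = {i : ⟨β_i, β⟩ ≠ 0},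 Ψ can be written (after absorbing phases) as Ψ = (Σ_{i∈S} c_i α_i⊗β_i)⊗γ + Σ_{i∉S} c_i α_i⊗β_i⊗γ_i. -/
/-!
Contracting `⟨α|Ψ⟩ = c (β ⊗ γ)` with `β_i` on the B factor isolates, by orthonormality of the `β_i`,
the single term `c_i ⟨α, α_i⟩ γ_i = c ⟨β_i, β⟩ γ`. When `⟨β_i, β⟩ ≠ 0` the right-hand side is
nonzero, so the unit vectors `γ_i` and `γ` differ by a phase. A phase leaves the projection
unchanged and can be absorbed into `c_i` in the decomposition of `Ψ`.
-/

open scoped BigOperators Kronecker Classical ComplexOrder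

namespace EPR

noncomputable section

section Vectors

variable {ι : Type*} [Fintype ι]

theorem cinner_smul_smul_self (t : ℂ) (v : ι → ℂ) :
    cinner (t • v) (t • v) = Complex.normSq t * cinner v v := by
  simp only [cinner, Pi.smul_apply, smul_eq_mul, map_mul, Complex.normSq_eq_conj_mul_self,
    Finset.mul_sum, mul_mul_mul_comm]

theorem proj_smul (t : ℂ) (v : ι → ℂ) : proj (t • v) = (Complex.normSq t : ℂ) • proj v := by
  ext k l
  simp only [proj, Matrix.of_apply, Matrix.smul_apply, Pi.smul_apply, smul_eq_mul, map_mul,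
    ← Complex.mul_conj, mul_mul_mul_comm]

theorem IsUnitVec.ne_zero {v : ι → ℂ} (hv : IsUnitVec v) : v ≠ 0 := by
  rintro rfl
  simp [IsUnitVec, cinner] at hv

theorem IsUnitVec.normSq_eq_one_of_smul {v : ι → ℂ} (hv : IsUnitVec v) {t : ℂ}
    (htv : IsUnitVec (t • v)) : Complex.normSq t = 1 := by
  have h : (Complex.normSq t : ℂ) * cinner v v = 1 := (cinner_smul_smul_self t v).symm.trans htv
  rw [show cinner v v = 1 from hv, mul_one] at h
  exact_mod_cast h

theorem IsUnitVec.exists_phase_of_smul_eq_smul {u v : ι → ℂ} (hu : IsUnitVec u) (hv : IsUnitVec v)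
    {x y : ℂ} (hy : y ≠ 0) (h : x • u = y • v) :
    ∃ t : ℂ, Complex.normSq t = 1 ∧ u = t • v := by
  have hx : x ≠ 0 := by
    rintro rfl
    exact smul_ne_zero hy hv.ne_zero (h.symm.trans (zero_smul ℂ u))
  have huv : u = (x⁻¹ * y) • v := by rw [mul_smul, ← h, inv_smul_smul₀ hx]
  exact ⟨x⁻¹ * y, hv.normSq_eq_one_of_smul (huv ▸ hu), huv⟩

end Vectors

section Contraction

/-- The partial contraction `⟨u|Φ⟩` of a vector `Φ` of a bipartite space with a vector `u` of the
first factor, as a linear map in `Φ`. Contracting a tripartite vector on A and then on B is an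
iteration of this map, since `ι × κ × μ` is `ι × (κ × μ)`. -/
def contractFst {ι κ : Type*} [Fintype ι] (u : ι → ℂ) : (ι × κ → ℂ) →ₗ[ℂ] κ → ℂ where
  toFun Φ k := ∑ a, (starRingEnd ℂ) (u a) * Φ (a, k)
  map_add' Φ Φ' := by
    ext k
    simp only [Pi.add_apply, mul_add, Finset.sum_add_distrib]
  map_smul' t Φ := by
    ext k
    simp only [Pi.smul_apply, smul_eq_mul, RingHom.id_apply, Finset.mul_sum, mul_left_comm]

variable {dA dB dC : ℕ}

theorem aContract_eq_contractFst (α : Fin dA → ℂ) (Ψ : Fin dA × Fin dB × Fin dC → ℂ) :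
    aContract α Ψ = contractFst α Ψ :=
  rfl

theorem contractFst_tensor2 (β β' : Fin dB → ℂ) (γ : Fin dC → ℂ) :
    contractFst β (tensor2 β' γ) = cinner β β' • γ := by
  ext k
  simp only [contractFst, LinearMap.coe_mk, AddHom.coe_mk, tensor2, cinner, Pi.smul_apply,
    smul_eq_mul, Finset.sum_mul, mul_assoc]

theorem contractFst_tensor3 (α α' : Fin dA → ℂ) (β : Fin dB → ℂ) (γ : Fin dC → ℂ) :
    contractFst α (tensor3 α' β γ) = cinner α α' • tensor2 β γ := by
  ext p
  simp only [contractFst, LinearMap.coe_mk, AddHom.coe_mk, tensor2, tensor3, cinner, Pi.smul_apply,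
    smul_eq_mul, Finset.sum_mul, mul_assoc]

theorem tensor3_smul_right (α : Fin dA → ℂ) (β : Fin dB → ℂ) (t : ℂ) (γ : Fin dC → ℂ) :
    tensor3 α β (t • γ) = t • tensor3 α β γ := by
  ext p
  simp only [tensor3, Pi.smul_apply, smul_eq_mul, mul_left_comm]

end Contraction

section Decomposition

variable {dA dB dC n : ℕ}

theorem OrthonormalFam.contractFst_sum_tensor2 {β : Fin n → Fin dB → ℂ} (hβ : OrthonormalFam β)
    (x : Fin n → ℂ) (γ : Fin n → Fin dC → ℂ) (i : Fin n) :
    contractFst (β i) (∑ j, x j • tensor2 (β j) (γ j)) = x i • γ i := by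
  simp only [map_sum, map_smul, contractFst_tensor2, hβ i, ite_smul, one_smul, zero_smul, smul_ite,
    smul_zero, Finset.sum_ite_eq, Finset.mem_univ, if_true]

theorem aContract_sum_tensor3 {ι : Type*} [Fintype ι] (αv : Fin dA → ℂ) (c : ι → ℂ)
    (α : ι → Fin dA → ℂ) (β : ι → Fin dB → ℂ) (γ : ι → Fin dC → ℂ) :
    aContract αv (∑ i, c i • tensor3 (α i) (β i) (γ i)) =
      ∑ i, (c i * cinner αv (α i)) • tensor2 (β i) (γ i) := by
  simp only [aContract_eq_contractFst, map_sum, map_smul, contractFst_tensor3, mul_smul]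

theorem OrthonormalFam.smul_eq_smul_of_aContract_eq {β : Fin n → Fin dB → ℂ}
    (hβ : OrthonormalFam β) {α : Fin n → Fin dA → ℂ} {γ : Fin n → Fin dC → ℂ} {c : Fin n → ℂ}
    {αv : Fin dA → ℂ} {βv : Fin dB → ℂ} {γv : Fin dC → ℂ} {cv : ℂ}
    (h : aContract αv (∑ i, c i • tensor3 (α i) (β i) (γ i)) = cv • tensor2 βv γv) (i : Fin n) :
    (c i * cinner αv (α i)) • γ i = (cv * cinner (β i) βv) • γv :=
  calc (c i * cinner αv (α i)) • γ i
      = contractFst (β i) (∑ j, (c j * cinner αv (α j)) • tensor2 (β j) (γ j)) :=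
        (hβ.contractFst_sum_tensor2 (fun j => c j * cinner αv (α j)) γ i).symm
    _ = contractFst (β i) (cv • tensor2 βv γv) := by rw [← aContract_sum_tensor3, h]
    _ = (cv * cinner (β i) βv) • γv := by rw [map_smul, contractFst_tensor2, smul_smul]

theorem exists_coeff_sum_tensor3_eq_of_phase {ι : Type*} [Fintype ι] (c : ι → ℂ)
    (α : ι → Fin dA → ℂ) (β : ι → Fin dB → ℂ) {γ : ι → Fin dC → ℂ} {γv : Fin dC → ℂ}
    {p : ι → Prop} [DecidablePred p]
    (hγ : ∀ i, ¬p i → ∃ t : ℂ, Complex.normSq t = 1 ∧ γ i = t • γv) :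
    ∃ c' : ι → ℂ, (∀ i, Complex.normSq (c' i) = Complex.normSq (c i)) ∧
      ∑ i, c i • tensor3 (α i) (β i) (γ i) =
        (∑ i with ¬p i, c' i • tensor3 (α i) (β i) γv) +
          ∑ i with p i, c i • tensor3 (α i) (β i) (γ i) := by
  have hphase : ∀ i, ∃ t : ℂ, Complex.normSq t = 1 ∧ (¬p i → γ i = t • γv) := fun i => by
    by_cases hi : p i
    · exact ⟨1, Complex.normSq_one, fun hi' => absurd hi hi'⟩
    · obtain ⟨t, ht, hti⟩ := hγ i hi
      exact ⟨t, ht, fun _ => hti⟩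
  choose t ht hγt using hphase
  refine ⟨fun i => c i * t i, fun i => by rw [Complex.normSq_mul, ht, mul_one], ?_⟩
  rw [← Finset.sum_filter_not_add_sum_filter Finset.univ p]
  congr 1
  refine Finset.sum_congr rfl fun i hi => ?_
  rw [hγt i (Finset.mem_filter.mp hi).2, tensor3_smul_right, smul_smul]

end Decomposition

theorem stmt9_general {dA dB dC n : ℕ} (Ψ : Fin dA × Fin dB × Fin dC → ℂ)
    (α : Fin n → Fin dA → ℂ) (β : Fin n → Fin dB → ℂ) (hβ : OrthonormalFam β)
    (γ : Fin n → Fin dC → ℂ) (hγ : ∀ i, IsUnitVec (γ i)) (c : Fin n → ℂ)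
    (hdecomp : Ψ = ∑ i, c i • tensor3 (α i) (β i) (γ i))
    (αv : Fin dA → ℂ) (βv : Fin dB → ℂ) (γv : Fin dC → ℂ) (hγv : IsUnitVec γv)
    (cv : ℂ) (hcv : cv ≠ 0) (h : aContract αv Ψ = cv • tensor2 βv γv) :
    (∀ i, cinner (β i) βv ≠ 0 → proj (γ i) = proj γv) ∧
    ∃ c' : Fin n → ℂ, (∀ i, Complex.normSq (c' i) = Complex.normSq (c i)) ∧
      Ψ = (∑ i ∈ Finset.univ.filter (fun i => cinner (β i) βv ≠ 0),
            c' i • tensor3 (α i) (β i) γv)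
        + ∑ i ∈ Finset.univ.filter (fun i => cinner (β i) βv = 0),
            c i • tensor3 (α i) (β i) (γ i) := by
  subst hdecomp
  have hphase : ∀ i, cinner (β i) βv ≠ 0 → ∃ t : ℂ, Complex.normSq t = 1 ∧ γ i = t • γv :=
    fun i hi => (hγ i).exists_phase_of_smul_eq_smul hγv (mul_ne_zero hcv hi)
      (hβ.smul_eq_smul_of_aContract_eq h i)
  refine ⟨fun i hi => ?_, ?_⟩
  · obtain ⟨t, ht, hti⟩ := hphase i hi
    rw [hti, proj_smul, ht, Complex.ofReal_one, one_smul]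
  · exact exists_coeff_sum_tensor3_eq_of_phase c α β hphase

/-- for `Ψ = ∑ c_i α_i⊗β_i⊗γ_i` (orthonormal `α`, orthonormal `β`, unit
`γ_i`, all `c_i ≠ 0`), if `⟨α|Ψ⟩ = c (β⊗γ)` for some unit vectors and `c ≠ 0`, then
`|γ_i⟩⟨γ_i| = |γ⟩⟨γ|` for every `i` with `⟨β_i, β⟩ ≠ 0`, and after absorbing phases
`Ψ = (∑_{i∈S} c'_i α_i⊗β_i)⊗γ + ∑_{i∉S} c_i α_i⊗β_i⊗γ_i` where
`S = {i : ⟨β_i, β⟩ ≠ 0}`. -/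
theorem stmt9 {dA dB dC n : ℕ} (Ψ : Fin dA × Fin dB × Fin dC → ℂ) (hΨ : IsUnitVec Ψ)
    (α : Fin n → Fin dA → ℂ) (hα : OrthonormalFam α)
    (β : Fin n → Fin dB → ℂ) (hβ : OrthonormalFam β)
    (γ : Fin n → Fin dC → ℂ) (hγ : ∀ i, IsUnitVec (γ i))
    (c : Fin n → ℂ) (hc : ∀ i, c i ≠ 0) (hcs : ∑ i, Complex.normSq (c i) = 1)
    (hdecomp : Ψ = ∑ i, c i • tensor3 (α i) (β i) (γ i))
    (αv : Fin dA → ℂ) (hαv : IsUnitVec αv) (βv : Fin dB → ℂ) (hβv : IsUnitVec βv)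
    (γv : Fin dC → ℂ) (hγv : IsUnitVec γv) (cv : ℂ) (hcv : cv ≠ 0)
    (h : aContract αv Ψ = cv • tensor2 βv γv) :
    (∀ i, cinner (β i) βv ≠ 0 → proj (γ i) = proj γv) ∧
    ∃ c' : Fin n → ℂ, (∀ i, Complex.normSq (c' i) = Complex.normSq (c i)) ∧
      Ψ = (∑ i ∈ Finset.univ.filter (fun i => cinner (β i) βv ≠ 0),
            c' i • tensor3 (α i) (β i) γv)
        + ∑ i ∈ Finset.univ.filter (fun i => cinner (β i) βv = 0),
            c i • tensor3 (α i) (β i) (γ i) :=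
  stmt9_general Ψ α β hβ γ hγ c hdecomp αv βv γv hγv cv hcv h

end

end EPR
end
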